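/- Let p ∈ P and s ∈ S be a pair of compatible states with L_p = coL_s. Then the following are equivalent: (I) the states p and s do not match; (II) the state p has a prefix successor compatible with s; (III) the state s has a suffix successor compatible with p; (IV) there is a letter b ∈ A \ L_p such that for any word X with prefix state p and any word Y with suffix state s, the word XbY is in C. -/

import Mathlib

open Filter Asymptotics
open scoped Classical

/-- An embedding order on words over a weighted alphabet. -/
structure EmbeddingOrder (A : Type*) (w : A → ℕ) where
  le : List A → List A → Prop
  le_refl : ∀ W, le W W
  le_trans : ∀ {U V W}, le U V → le V W → le U W
  le_antisymm : ∀ {V W}, le V W → le W V → V = W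
  nil_le : ∀ W, le [] W
  weight_lt : ∀ {W V}, le W V → W ≠ V → (W.map w).sum < (V.map w).sum
  le_iff_factor : ∀ W V, le W V ↔ ∃ Ws : List (List A),
    Ws.length = V.length ∧ Ws.flatten = W ∧ ∀ q ∈ Ws.zip V, le q.1 [q.2]

namespace EmbeddingOrder

variable {A : Type*} {w : A → ℕ} (E : EmbeddingOrder A w) {f : ℕ} (φ : Fin f → List A)

/-- The weight of a word: the sum of the weights of its letters. -/
def wt (w : A → ℕ) (W : List A) : ℕ := (W.map w).sum

/-- The class `C = A* ∩ Av(φ¹,…,φ^f)` of all words avoiding every forbidden word. -/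
def Cset : Set (List A) := {W | ∀ i, ¬ E.le (φ i) W}

/-- The prefix state of `W`: its `i`-th component is the length of the longest prefix
of the forbidden word `φ i` contained in `W`. -/
noncomputable def pstate (W : List A) : Fin f → ℕ := fun i =>
  sSup {p | p ≤ (φ i).length ∧ E.le ((φ i).take p) W}

/-- The suffix state of `W`: its `i`-th component is the length of the longest suffix
of the forbidden word `φ i` contained in `W`. -/
noncomputable def sstate (W : List A) : Fin f → ℕ := fun i =>
  sSup {p | p ≤ (φ i).length ∧ E.le ((φ i).drop ((φ i).length - p)) W}

/-- A prefix state `p` and a suffix state `s` *overlap* if `p i + s i ≥ ℓ_i` for some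
`i` (equivalently, `XY ∉ C` whenever `X` has prefix state `p` and `Y` suffix state `s`);
otherwise they are *compatible*. -/
def POverlap (p s : Fin f → ℕ) : Prop := ∃ i, (φ i).length ≤ p i + s i

/-- The (prefix) loop alphabet of a state `p`: the letters whose appending does not
change the prefix state `p`. -/
def stateLoopP (p : Fin f → ℕ) : Set A :=
  {a | ∀ X : List A, E.pstate φ X = p → E.pstate φ (X ++ [a]) = p}

/-- The suffix loop alphabet of a state `s`: the letters whose prepending does not
change the suffix state `s`. -/
def stateLoopS (s : Fin f → ℕ) : Set A :=
  {a | ∀ Y : List A, E.sstate φ Y = s → E.sstate φ (a :: Y) = s}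

/-- `p'` is a *prefix successor* of `p`: `p' ≠ p` and some letter is a transition
symbol from `p` to `p'`. -/
def PSucc (p p' : Fin f → ℕ) : Prop :=
  p ≠ p' ∧ ∃ b : A, ∀ X : List A, E.pstate φ X = p → E.pstate φ (X ++ [b]) = p'

/-- `s'` is a *suffix successor* of `s`. -/
def SSucc (s s' : Fin f → ℕ) : Prop :=
  s ≠ s' ∧ ∃ b : A, ∀ Y : List A, E.sstate φ Y = s → E.sstate φ (b :: Y) = s'

/-- Compatible states `p` (prefix) and `s` (suffix) *match* if every prefix successor
of `p` overlaps with `s` and every suffix successor of `s` overlaps with `p`. -/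
def Matches (p s : Fin f → ℕ) : Prop :=
  ¬ POverlap φ p s ∧ (∀ p', E.PSucc φ p p' → POverlap φ p' s) ∧
    ∀ s', E.SSucc φ s s' → POverlap φ p s'

/-- `ρ(S)`: the unique positive root of `1 − Σ_{a∈S} x^{weight a}` for a nonempty set
`S` of letters (realised as a supremum). -/
noncomputable def rhoOf (w : A → ℕ) (S : Set A) : ℝ :=
  sSup {x : ℝ | 0 ≤ x ∧ ∑' a : S, x ^ w (a : A) ≤ 1}

/-- The growth rate of `S*`: the reciprocal `ρ(S)⁻¹` of the positive root of
`1 − Σ_{a∈S} x^{weight a}`. -/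
noncomputable def growthOf (w : A → ℕ) (S : Set A) : ℝ := (rhoOf w S)⁻¹

/-- The dominant growth rate `γ` of the class: the largest growth rate of the loop
alphabet of a (reachable) prefix state. -/
noncomputable def gammaC : ℝ :=
  sSup {g : ℝ | ∃ X ∈ E.Cset φ, g = growthOf w (E.stateLoopP φ (E.pstate φ X))}

/-- The number of dominant loop blocks (equivalently, dominant states) in the prefix
decomposition of `W`. -/
noncomputable def domCountP (W : List A) : ℕ :=
  Set.ncard {p : Fin f → ℕ | (∃ j ≤ W.length, E.pstate φ (W.take j) = p) ∧
    growthOf w (E.stateLoopP φ p) = E.gammaC φ}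

/-- The number of dominant loop blocks (equivalently, dominant states) in the suffix
decomposition of `W`. -/
noncomputable def domCountS (W : List A) : ℕ :=
  Set.ncard {s : Fin f → ℕ | (∃ j ≤ W.length, E.sstate φ (W.drop j) = s) ∧
    growthOf w (E.stateLoopS φ s) = E.gammaC φ}

/-- `D`: the largest number of dominant states appearing on a single prefix transition
path of a word of the class. -/
noncomputable def Dmax : ℕ := sSup {d : ℕ | ∃ W ∈ E.Cset φ, E.domCountP φ W = d}

end EmbeddingOrder

open EmbeddingOrder

/-!
A prefix state records exactly which prefixes of the forbidden words are contained in a word, and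
a suffix state which suffixes. Splitting an embedding of `φ i` into `X ++ Y` at the junction
therefore shows that `X ++ Y` belongs to the class iff the prefix state of `X` and the suffix state
of `Y` are compatible. Reading `X ++ b :: Y` as `(X ++ [b]) ++ Y`, membership in the class says that
the prefix successor along `b` is compatible with the state of `Y`; reading it as `X ++ (b :: Y)`,
that the suffix successor along `b` is compatible with the state of `X`. Since the two loop
alphabets agree, the same letters `b` count in both readings.
-/

namespace EmbeddingOrder

variable {A : Type*} {w : A → ℕ} (E : EmbeddingOrder A w) {f : ℕ} (φ : Fin f → List A)

section Concatenation

variable {E} {U V W X Y : List A}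

theorem le_append_append (hU : E.le U X) (hV : E.le V Y) : E.le (U ++ V) (X ++ Y) := by
  obtain ⟨Us, hUs, rfl, hUX⟩ := (E.le_iff_factor _ _).1 hU
  obtain ⟨Vs, hVs, rfl, hVY⟩ := (E.le_iff_factor _ _).1 hV
  refine (E.le_iff_factor _ _).2 ⟨Us ++ Vs, by simp [hUs, hVs], List.flatten_append, ?_⟩
  rw [List.zip_append hUs]
  exact List.forall_mem_append.2 ⟨hUX, hVY⟩

theorem exists_append_of_le_append (h : E.le W (X ++ Y)) :
    ∃ U V, U ++ V = W ∧ E.le U X ∧ E.le V Y := by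
  obtain ⟨Ws, hlen, rfl, hle⟩ := (E.le_iff_factor _ _).1 h
  obtain ⟨Us, Vs, rfl, hUs, hVs⟩ : ∃ Us Vs, Us ++ Vs = Ws ∧ Us.length = X.length ∧
      Vs.length = Y.length :=
    ⟨Ws.take X.length, Ws.drop X.length, List.take_append_drop _ _, by simp [hlen], by simp [hlen]⟩
  rw [List.zip_append hUs, List.forall_mem_append] at hle
  exact ⟨Us.flatten, Vs.flatten, List.flatten_append.symm,
    (E.le_iff_factor _ _).2 ⟨Us, hUs, rfl, hle.1⟩, (E.le_iff_factor _ _).2 ⟨Vs, hVs, rfl, hle.2⟩⟩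

theorem le_append_iff : E.le W (X ++ Y) ↔ ∃ U V, U ++ V = W ∧ E.le U X ∧ E.le V Y :=
  ⟨exists_append_of_le_append, fun ⟨_, _, hW, hU, hV⟩ => hW ▸ le_append_append hU hV⟩

theorem le_of_prefix (h : U <+: W) : E.le U W := by
  obtain ⟨V, rfl⟩ := h
  exact le_append_iff.2 ⟨U, [], List.append_nil U, E.le_refl U, E.nil_le V⟩

theorem le_of_suffix (h : V <:+ W) : E.le V W := by
  obtain ⟨U, rfl⟩ := h
  exact le_append_iff.2 ⟨[], V, List.nil_append V, E.nil_le U, E.le_refl V⟩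

end Concatenation

section States

theorem pstate_le_length (X : List A) (i : Fin f) : E.pstate φ X i ≤ (φ i).length :=
  csSup_le ⟨0, Nat.zero_le _, E.nil_le X⟩ fun _ hp => hp.1

theorem sstate_le_length (Y : List A) (i : Fin f) : E.sstate φ Y i ≤ (φ i).length :=
  csSup_le ⟨0, Nat.zero_le _, by simpa using E.nil_le Y⟩ fun _ hp => hp.1

theorem take_pstate_le (X : List A) (i : Fin f) : E.le ((φ i).take (E.pstate φ X i)) X :=
  (Nat.sSup_mem (s := {p | p ≤ (φ i).length ∧ E.le ((φ i).take p) X})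
    ⟨0, Nat.zero_le _, E.nil_le X⟩ ⟨(φ i).length, fun _ hp => hp.1⟩).2

theorem drop_length_sub_sstate_le (Y : List A) (i : Fin f) :
    E.le ((φ i).drop ((φ i).length - E.sstate φ Y i)) Y :=
  (Nat.sSup_mem (s := {p | p ≤ (φ i).length ∧ E.le ((φ i).drop ((φ i).length - p)) Y})
    ⟨0, Nat.zero_le _, by simpa using E.nil_le Y⟩ ⟨(φ i).length, fun _ hp => hp.1⟩).2

variable {φ} {i : Fin f} {U V X X' Y Y' : List A}

theorem le_iff_length_le_pstate (hU : U <+: φ i) : E.le U X ↔ U.length ≤ E.pstate φ X i := by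
  constructor
  · intro hUX
    rw [List.prefix_iff_eq_take.1 hU] at hUX
    exact le_csSup ⟨(φ i).length, fun _ hp => hp.1⟩ ⟨hU.length_le, hUX⟩
  · intro hlen
    have hprefix : U <+: (φ i).take (E.pstate φ X i) := List.prefix_take_iff.2 ⟨hU, hlen⟩
    exact E.le_trans (le_of_prefix hprefix) (E.take_pstate_le φ X i)

theorem le_iff_length_le_sstate (hV : V <:+ φ i) : E.le V Y ↔ V.length ≤ E.sstate φ Y i := by
  constructor
  · intro hVY
    rw [List.suffix_iff_eq_drop.1 hV] at hVY
    exact le_csSup ⟨(φ i).length, fun _ hp => hp.1⟩ ⟨hV.length_le, hVY⟩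
  · intro hlen
    have hsuffix : V <:+ (φ i).drop ((φ i).length - E.sstate φ Y i) :=
      List.suffix_of_suffix_length_le hV (List.drop_suffix _ _) <| by
        rwa [List.length_drop, Nat.sub_sub_self (E.sstate_le_length φ Y i)]
    exact E.le_trans (le_of_suffix hsuffix) (E.drop_length_sub_sstate_le φ Y i)

theorem pstate_le_of_forall_prefix (h : ∀ U, U <+: φ i → E.le U X → E.le U X') :
    E.pstate φ X i ≤ E.pstate φ X' i := by
  have hprefix := List.take_prefix (E.pstate φ X i) (φ i)
  have hle := (E.le_iff_length_le_pstate hprefix).1 (h _ hprefix (E.take_pstate_le φ X i))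
  rwa [List.length_take_of_le (E.pstate_le_length φ X i)] at hle

theorem sstate_le_of_forall_suffix (h : ∀ V, V <:+ φ i → E.le V Y → E.le V Y') :
    E.sstate φ Y i ≤ E.sstate φ Y' i := by
  have hsuffix := List.drop_suffix ((φ i).length - E.sstate φ Y i) (φ i)
  have hle := (E.le_iff_length_le_sstate hsuffix).1
    (h _ hsuffix (E.drop_length_sub_sstate_le φ Y i))
  rwa [List.length_drop, Nat.sub_sub_self (E.sstate_le_length φ Y i)] at hle

theorem pstate_append_mono (h : E.pstate φ X i ≤ E.pstate φ X' i) (Z : List A) :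
    E.pstate φ (X ++ Z) i ≤ E.pstate φ (X' ++ Z) i := by
  refine E.pstate_le_of_forall_prefix fun W hW hWXZ => ?_
  obtain ⟨U, V, rfl, hUX, hVZ⟩ := le_append_iff.1 hWXZ
  have hU : U <+: φ i := (List.prefix_append U V).trans hW
  have hUX' : E.le U X' :=
    (E.le_iff_length_le_pstate hU).2 (((E.le_iff_length_le_pstate hU).1 hUX).trans h)
  exact le_append_append hUX' hVZ

theorem sstate_append_mono (h : E.sstate φ Y i ≤ E.sstate φ Y' i) (Z : List A) :
    E.sstate φ (Z ++ Y) i ≤ E.sstate φ (Z ++ Y') i := by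
  refine E.sstate_le_of_forall_suffix fun W hW hWZY => ?_
  obtain ⟨U, V, rfl, hUZ, hVY⟩ := le_append_iff.1 hWZY
  have hV : V <:+ φ i := (List.suffix_append U V).trans hW
  have hVY' : E.le V Y' :=
    (E.le_iff_length_le_sstate hV).2 (((E.le_iff_length_le_sstate hV).1 hVY).trans h)
  exact le_append_append hUZ hVY'

theorem pstate_append_congr (h : E.pstate φ X = E.pstate φ X') (Z : List A) :
    E.pstate φ (X ++ Z) = E.pstate φ (X' ++ Z) :=
  funext fun i => Nat.le_antisymm (E.pstate_append_mono (congrFun h i).le Z)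
    (E.pstate_append_mono (congrFun h i).ge Z)

theorem sstate_append_congr (h : E.sstate φ Y = E.sstate φ Y') (Z : List A) :
    E.sstate φ (Z ++ Y) = E.sstate φ (Z ++ Y') :=
  funext fun i => Nat.le_antisymm (E.sstate_append_mono (congrFun h i).le Z)
    (E.sstate_append_mono (congrFun h i).ge Z)

theorem le_append_iff_length_le_add :
    E.le (φ i) (X ++ Y) ↔ (φ i).length ≤ E.pstate φ X i + E.sstate φ Y i := by
  constructor
  · intro h
    obtain ⟨U, V, hUV, hUX, hVY⟩ := le_append_iff.1 h
    have hU := (E.le_iff_length_le_pstate ⟨V, hUV⟩).1 hUX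
    have hV := (E.le_iff_length_le_sstate ⟨U, hUV⟩).1 hVY
    rw [← hUV, List.length_append]
    exact add_le_add hU hV
  · intro h
    have hV : E.le ((φ i).drop (E.pstate φ X i)) Y := by
      rw [E.le_iff_length_le_sstate (List.drop_suffix _ _), List.length_drop]
      exact Nat.sub_le_iff_le_add'.2 h
    exact le_append_iff.2 ⟨_, _, List.take_append_drop _ _, E.take_pstate_le φ X i, hV⟩

theorem append_mem_Cset_iff :
    X ++ Y ∈ E.Cset φ ↔ ¬ POverlap φ (E.pstate φ X) (E.sstate φ Y) := by
  rw [POverlap, not_exists]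
  exact forall_congr' fun _ => not_congr E.le_append_iff_length_le_add

end States

section Transitions

variable {φ} {X Y : List A} {b : A} {p p' s s' : Fin f → ℕ}

theorem mem_stateLoopP_pstate :
    b ∈ E.stateLoopP φ (E.pstate φ X) ↔ E.pstate φ (X ++ [b]) = E.pstate φ X :=
  ⟨fun h => h X rfl, fun h _ hX => (E.pstate_append_congr hX [b]).trans h⟩

theorem mem_stateLoopS_sstate :
    b ∈ E.stateLoopS φ (E.sstate φ Y) ↔ E.sstate φ (b :: Y) = E.sstate φ Y :=
  ⟨fun h => h Y rfl, fun h _ hY => (E.sstate_append_congr hY [b]).trans h⟩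

theorem psucc_pstate_iff :
    E.PSucc φ (E.pstate φ X) p' ↔
      ∃ b ∉ E.stateLoopP φ (E.pstate φ X), E.pstate φ (X ++ [b]) = p' := by
  simp only [mem_stateLoopP_pstate]
  constructor
  · rintro ⟨hne, b, hb⟩
    exact ⟨b, (hb X rfl).trans_ne hne.symm, hb X rfl⟩
  · rintro ⟨b, hb, rfl⟩
    exact ⟨Ne.symm hb, b, fun _ hX => E.pstate_append_congr hX [b]⟩

theorem ssucc_sstate_iff :
    E.SSucc φ (E.sstate φ Y) s' ↔
      ∃ b ∉ E.stateLoopS φ (E.sstate φ Y), E.sstate φ (b :: Y) = s' := by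
  simp only [mem_stateLoopS_sstate]
  constructor
  · rintro ⟨hne, b, hb⟩
    exact ⟨b, (hb Y rfl).trans_ne hne.symm, hb Y rfl⟩
  · rintro ⟨b, hb, rfl⟩
    exact ⟨Ne.symm hb, b, fun _ hY => E.sstate_append_congr hY [b]⟩

theorem exists_psucc_not_pOverlap_iff :
    (∃ p', E.PSucc φ (E.pstate φ X) p' ∧ ¬ POverlap φ p' (E.sstate φ Y)) ↔
      ∃ b ∉ E.stateLoopP φ (E.pstate φ X), X ++ b :: Y ∈ E.Cset φ := by
  simp only [psucc_pstate_iff, List.append_cons X _ Y, append_mem_Cset_iff]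
  exact ⟨fun ⟨_, ⟨b, hb, hp'⟩, h⟩ => ⟨b, hb, hp' ▸ h⟩, fun ⟨b, hb, h⟩ => ⟨_, ⟨b, hb, rfl⟩, h⟩⟩

theorem exists_ssucc_not_pOverlap_iff :
    (∃ s', E.SSucc φ (E.sstate φ Y) s' ∧ ¬ POverlap φ (E.pstate φ X) s') ↔
      ∃ b ∉ E.stateLoopS φ (E.sstate φ Y), X ++ b :: Y ∈ E.Cset φ := by
  simp only [ssucc_sstate_iff, append_mem_Cset_iff]
  exact ⟨fun ⟨_, ⟨b, hb, hs'⟩, h⟩ => ⟨b, hb, hs' ▸ h⟩, fun ⟨b, hb, h⟩ => ⟨_, ⟨b, hb, rfl⟩, h⟩⟩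

theorem forall_append_cons_mem_Cset_iff :
    (∀ X' Y', E.pstate φ X' = E.pstate φ X → E.sstate φ Y' = E.sstate φ Y →
      X' ++ b :: Y' ∈ E.Cset φ) ↔ X ++ b :: Y ∈ E.Cset φ := by
  refine ⟨fun h => h X Y rfl rfl, fun h X' Y' hX hY => ?_⟩
  have hbY : E.sstate φ (b :: Y') = E.sstate φ (b :: Y) := E.sstate_append_congr hY [b]
  rwa [append_mem_Cset_iff, hX, hbY, ← append_mem_Cset_iff]

theorem not_matches_iff (hcompat : ¬ POverlap φ p s) :
    ¬ E.Matches φ p s ↔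
      (∃ p', E.PSucc φ p p' ∧ ¬ POverlap φ p' s) ∨ ∃ s', E.SSucc φ s s' ∧ ¬ POverlap φ p s' := by
  simp only [Matches, hcompat, not_false_eq_true, true_and, not_and_or, not_forall, exists_prop]

end Transitions

end EmbeddingOrder

theorem match_tfae_general {A : Type*} {w : A → ℕ} (E : EmbeddingOrder A w) {f : ℕ}
    (φ : Fin f → List A) {X Y : List A}
    (hcompat : ¬ POverlap φ (E.pstate φ X) (E.sstate φ Y))
    (hloop : E.stateLoopP φ (E.pstate φ X) = E.stateLoopS φ (E.sstate φ Y)) :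
    List.TFAE [
      ¬ E.Matches φ (E.pstate φ X) (E.sstate φ Y),
      ∃ p', E.PSucc φ (E.pstate φ X) p' ∧ ¬ POverlap φ p' (E.sstate φ Y),
      ∃ s', E.SSucc φ (E.sstate φ Y) s' ∧ ¬ POverlap φ (E.pstate φ X) s',
      ∃ b, b ∉ E.stateLoopP φ (E.pstate φ X) ∧
        ∀ X' Y', E.pstate φ X' = E.pstate φ X → E.sstate φ Y' = E.sstate φ Y →
          X' ++ b :: Y' ∈ E.Cset φ] := by
  simp only [E.not_matches_iff hcompat, exists_psucc_not_pOverlap_iff,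
    exists_ssucc_not_pOverlap_iff, forall_append_cons_mem_Cset_iff, ← hloop, or_self]
  tfae_finish

/-- **Lemma `lem-match2`.**  Let `p ∈ P` and `s ∈ S` (represented by words
`X₀, Y₀ ∈ C`) be a pair of compatible states with `L_p = coL_s`.  Then the following
are equivalent: (I) `p` and `s` do not match; (II) `p` has a prefix successor
compatible with `s`; (III) `s` has a suffix successor compatible with `p`; (IV) there
is a letter `b ∈ A \ L_p` such that for any word `X` with prefix state `p` and any word
`Y` with suffix state `s`, the word `XbY` is in `C`. -/
theorem match_tfae {A : Type*} [Fintype A] {w : A → ℕ}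
    (E : EmbeddingOrder A w) {f : ℕ} (φ : Fin f → List A)
    (hw : ∀ a, 0 < w a)
    (one : A) (hone : w one = 1) (hone_le : ∀ a : A, E.le [one] [a])
    (hf : 0 < f) (hφne : ∀ i, φ i ≠ [])
    (hφmin : ∀ i ψ, E.le ψ (φ i) → ψ ≠ φ i → ψ ∈ E.Cset φ)
    (hunb : ¬ ∃ M : ℕ, ∀ n : ℕ,
      Set.ncard {W : List A | W ∈ E.Cset φ ∧ EmbeddingOrder.wt w W = n} ≤ M)
    (X₀ Y₀ : List A) (hX₀ : X₀ ∈ E.Cset φ) (hY₀ : Y₀ ∈ E.Cset φ)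
    (hcompat : ¬ POverlap φ (E.pstate φ X₀) (E.sstate φ Y₀))
    (hL : E.stateLoopP φ (E.pstate φ X₀) = E.stateLoopS φ (E.sstate φ Y₀)) :
    ((¬ E.Matches φ (E.pstate φ X₀) (E.sstate φ Y₀)) ↔
        ∃ p', E.PSucc φ (E.pstate φ X₀) p' ∧ ¬ POverlap φ p' (E.sstate φ Y₀)) ∧
    ((¬ E.Matches φ (E.pstate φ X₀) (E.sstate φ Y₀)) ↔
        ∃ s', E.SSucc φ (E.sstate φ Y₀) s' ∧ ¬ POverlap φ (E.pstate φ X₀) s') ∧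
    ((¬ E.Matches φ (E.pstate φ X₀) (E.sstate φ Y₀)) ↔
        ∃ b : A, b ∉ E.stateLoopP φ (E.pstate φ X₀) ∧
          ∀ X Y : List A, E.pstate φ X = E.pstate φ X₀ → E.sstate φ Y = E.sstate φ Y₀ →
            (X ++ b :: Y) ∈ E.Cset φ) := by
  have h := match_tfae_general E φ hcompat hL
  exact ⟨h.out 0 1, h.out 0 2, h.out 0 3⟩
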